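/- There is no infinite set S ⊆ ℕ with computable characteristic function that is p-cohesive; that is, for every infinite S ⊆ ℕ whose membership predicate is computable, there exists a primitive recursive function p : ℕ → Bool such that S is not almost contained in {i | p(i) = true} and S is not almost contained in {i | p(i) = false}. -/

import Mathlib

/-- The stage-by-stage construction: a current colour together with the start of its block. -/
def flipState (R : ℕ → ℕ → Prop) [DecidableRel R] : ℕ → Bool × ℕ
  | 0 => (false, 0)
  | k + 1 =>
    if ∃ x < k + 1, (flipState R k).2 ≤ x ∧ R k x then (!(flipState R k).1, k + 1)
    else flipState R k

theorem flipState_inv (R : ℕ → ℕ → Prop) [DecidableRel R] (k : ℕ) :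
    (flipState R k).2 ≤ k ∧ ∀ j, (flipState R k).2 ≤ j → j ≤ k → flipState R j = flipState R k := by
  induction k with
  | zero => exact ⟨le_rfl, fun j _ h => by rw [Nat.le_zero.1 h]⟩
  | succ k ih =>
    by_cases h : ∃ x < k + 1, (flipState R k).2 ≤ x ∧ R k x
    · have e : flipState R (k + 1) = (!(flipState R k).1, k + 1) := by
        rw [flipState, if_pos h]
      refine ⟨by rw [e], fun j h1 h2 => ?_⟩
      rw [e] at h1
      rw [le_antisymm h2 h1]
    · have e : flipState R (k + 1) = flipState R k := by
        rw [flipState, if_neg h]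
      refine ⟨by rw [e]; omega, fun j h1 h2 => ?_⟩
      rw [e] at h1 
      rcases Nat.lt_or_ge k j with h3 | h3
      · rw [show j = k + 1 by omega]
      · rw [e]; exact ih.2 j h1 h3

theorem flipState_step (S : Set ℕ) (hinf : S.Infinite) (R : ℕ → ℕ → Prop) [DecidableRel R]
    (hs : ∀ k x, R k x → x ∈ S) (hm : ∀ k l x, k ≤ l → R k x → R l x)
    (hc : ∀ x ∈ S, ∃ k, R k x) (k : ℕ) :
    ∃ l ≥ k, flipState R (l + 1) = (!(flipState R k).1, l + 1) ∧
      ∃ x ∈ S, (flipState R k).2 ≤ x ∧ flipState R x = flipState R k := by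
  have ex : ∃ l, k ≤ l ∧ ∃ x < l + 1, (flipState R k).2 ≤ x ∧ R l x := by
    obtain ⟨x, hxS, hx⟩ := hinf.exists_gt (flipState R k).2
    obtain ⟨m, hm'⟩ := hc x hxS
    exact ⟨k + x + m, by omega, x, by omega, hx.le, hm _ _ _ (by omega) hm'⟩
  classical
  have hl := Nat.find_spec ex
  have hmin := fun m => Nat.find_min ex (m := m)
  generalize Nat.find ex = l at hl hmin
  have key : ∀ d, k + d ≤ l → flipState R (k + d) = flipState R k := by
    intro d
    induction d with
    | zero => intro _; rfl
    | succ d ih =>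
      intro hd
      have e := ih (by omega)
      rw [← add_assoc, flipState, if_neg, e]
      rintro h
      rw [e] at h
      exact hmin (k + d) (by omega) ⟨by omega, h⟩
  obtain ⟨hkl, h⟩ := hl
  have e : flipState R l = flipState R k := by
    have := key (l - k) (by omega)
    rwa [Nat.add_sub_cancel' hkl] at this
  refine ⟨l, hkl, ?_, ?_⟩
  · rw [flipState, e, if_pos h]
  · obtain ⟨x, hx, hx1, hx2⟩ := h
    refine ⟨x, hs _ _ hx2, hx1, ?_⟩
    rw [(flipState_inv R l).2 x (by rw [e]; exact hx1) (by omega), e]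

theorem flipState_hits (S : Set ℕ) (hinf : S.Infinite) (R : ℕ → ℕ → Prop) [DecidableRel R]
    (hs : ∀ k x, R k x → x ∈ S) (hm : ∀ k l x, k ≤ l → R k x → R l x)
    (hc : ∀ x ∈ S, ∃ k, R k x) (b : Bool) (N : ℕ) :
    ∃ x ∈ S, N < x ∧ (flipState R x).1 = b := by
  obtain ⟨k, hk, e, -⟩ := flipState_step S hinf R hs hm hc N
  obtain ⟨l, hl, e', x, hxS, hx, ex⟩ := flipState_step S hinf R hs hm hc (k + 1)
  obtain ⟨m, hm', e'', y, hyS, hy, ey⟩ := flipState_step S hinf R hs hm hc (l + 1)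
  rw [e] at hx ex e'
  rw [e'] at hy ey
  by_cases hb : (!(flipState R N).1) = b
  · exact ⟨x, hxS, by simp at hx; omega, by rw [ex]; exact hb⟩
  · refine ⟨y, hyS, by simp at hy; omega, ?_⟩
    rw [ey]
    revert hb
    cases b <;> cases (flipState R N).1 <;> simp

theorem flipState_primrec (R : ℕ → ℕ → Prop) [DecidableRel R] (hR : PrimrecRel R) :
    Primrec (flipState R) := by
  have hrel : PrimrecRel fun (x : ℕ) (q : ℕ × Bool × ℕ) => q.2.2 ≤ x ∧ R q.1 x := by
    refine PrimrecPred.and ?_ ?_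
    · exact Primrec.nat_le.comp (Primrec.snd.comp (Primrec.snd.comp Primrec.snd)) Primrec.fst
    · exact hR.comp (Primrec.fst.comp Primrec.snd) Primrec.fst
  have hex : PrimrecPred fun q : ℕ × Bool × ℕ => ∃ x < q.1 + 1, q.2.2 ≤ x ∧ R q.1 x := by
    have h := hrel.exists_mem_list
    refine (PrimrecRel.comp (f := fun q : ℕ × Bool × ℕ => List.range (q.1 + 1))
      (g := fun q => q) h
      (Primrec.list_range.comp (Primrec.succ.comp Primrec.fst)) Primrec.id).of_eq fun q => ?_
    simp only [List.mem_range]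
  have hstep : Primrec₂ fun (k : ℕ) (q : Bool × ℕ) =>
      if ∃ x < k + 1, q.2 ≤ x ∧ R k x then (!q.1, k + 1) else q := by
    refine Primrec.ite (c := fun q : ℕ × Bool × ℕ => ∃ x < q.1 + 1, q.2.2 ≤ x ∧ R q.1 x) hex ?_ ?_
    · exact Primrec.pair (Primrec.not.comp (Primrec.fst.comp Primrec.snd))
        (Primrec.succ.comp Primrec.fst)
    · exact Primrec.snd
  refine (Primrec.nat_rec₁ (false, 0) hstep).of_eq fun n => ?_
  induction n with
  | zero => rfl
  | succ n ih => rw [flipState, ← ih]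

/-- No computable infinite set is p-cohesive: for every infinite `S ⊆ ℕ` with
computable membership predicate there is a primitive recursive `p : ℕ → Bool`
such that `S` is neither almost contained in `{i | p i = true}` nor almost
contained in `{i | p i = false}`. -/
theorem no_computable_p_cohesive (S : Set ℕ) (hinf : S.Infinite)
    (hS : ComputablePred fun n => n ∈ S) :
    ∃ p : ℕ → Bool, Primrec p ∧
      ¬ (S \ { i : ℕ | p i = true }).Finite ∧
      ¬ (S \ { i : ℕ | p i = false }).Finite := by
  obtain ⟨f, hf, hSf⟩ := ComputablePred.computable_iff.1 hS
  have hSf' : ∀ x, x ∈ S ↔ f x = true := fun x => iff_of_eq (congrFun hSf x)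
  have hg : Computable fun x => Encodable.encode (f x) := Computable.encode.comp hf
  obtain ⟨c, hcode⟩ := Nat.Partrec.Code.exists_code.1 (Partrec.nat_iff.1 hg)
  let R : ℕ → ℕ → Prop := fun k x => Nat.Partrec.Code.evaln k c x = some (Encodable.encode true)
  have hR : PrimrecRel R := by
    refine Primrec.eq.comp ?_ (Primrec.const _)
    exact Nat.Partrec.Code.primrec_evaln.comp
      (Primrec.pair (Primrec.pair Primrec.fst (Primrec.const c)) Primrec.snd)
  have hmem : ∀ x, x ∈ S ↔ Encodable.encode true ∈ Nat.Partrec.Code.eval c x := by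
    intro x
    rw [hcode, hSf']
    simp only [PFun.coe_val, Part.mem_some_iff]
    rw [Encodable.encode_inj, eq_comm]
  have hs : ∀ k x, R k x → x ∈ S := fun k x h =>
    (hmem x).2 (Nat.Partrec.Code.evaln_sound h)
  have hm : ∀ k l x, k ≤ l → R k x → R l x := fun k l x h h' =>
    Nat.Partrec.Code.evaln_mono h h'
  have hc : ∀ x ∈ S, ∃ k, R k x := fun x hx =>
    Nat.Partrec.Code.evaln_complete.1 ((hmem x).1 hx)
  have : DecidableRel R := fun k x => inferInstanceAs (Decidable (_ = _))
  refine ⟨fun n => (flipState R n).1, Primrec.fst.comp (flipState_primrec R hR), ?_, ?_⟩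
  · refine Set.infinite_of_forall_exists_gt fun N => ?_
    obtain ⟨x, hx, hN, h⟩ := flipState_hits S hinf R hs hm hc false N
    exact ⟨x, ⟨hx, by simp [h]⟩, hN⟩
  · refine Set.infinite_of_forall_exists_gt fun N => ?_
    obtain ⟨x, hx, hN, h⟩ := flipState_hits S hinf R hs hm hc true N
    exact ⟨x, ⟨hx, by simp [h]⟩, hN⟩
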